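/- Let G be a p-group of nilpotency class 2. Then the following are equivalent: (1) G is semi-extraspecial; (2) every χ ∈ Irr(G) whose kernel does not contain G' satisfies χ(1) = √(|G : G'|); (3) the number of irreducible characters of G whose kernel does not contain G' equals |G'| − 1. -/

import Mathlib

open CategoryTheory

noncomputable def repKer {G : Type} [Group G] (V : FDRep ℂ G) : Subgroup G :=
  (Representation.asGroupHom V.ρ).ker

/-- A nonabelian `p`-group is special if `G' = Z(G) = Φ(G)`. -/
def IsSpecial (G : Type*) [Group G] : Prop :=
  (¬ ∀ a b : G, a * b = b * a) ∧ commutator G = Subgroup.center G ∧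
    commutator G = frattini G

/-- An extraspecial `p`-group: special with `|G'| = p`. -/
def IsExtraspecial (p : ℕ) (G : Type*) [Group G] : Prop :=
  IsPGroup p G ∧ IsSpecial G ∧ Nat.card (commutator G) = p

/-- A semi-extraspecial `p`-group: special, and `G/M` is extraspecial for every
maximal subgroup `M` of `G'`. -/
def IsSemiExtraspecial (p : ℕ) (G : Type*) [Group G] : Prop :=
  IsPGroup p G ∧ IsSpecial G ∧
    ∀ (M : Subgroup G) (hM : M.Normal), M ≤ commutator G →
      IsCoatom (M.subgroupOf (commutator G)) →
        haveI := hM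
        IsExtraspecial p (G ⧸ M)

/-
For a normal subgroup `N` write `Z_N` for the preimage of `Z(G/N)` in `G`. Conditions (1) and (2)
both say that `Z_N ≤ G'` for every normal subgroup `N` not containing `G'`. For (1), `Z_N` grows
with `N ∩ G'`, so it suffices to consider the maximal subgroups `N` of `G'`. For (2), since the
class is 2, an irreducible character `χ` vanishes off `Z_{ker χ}`, while `χ(g) χ(g⁻¹) = χ(1)²` for
`g ∈ Z_{ker χ}`. Hence `χ(1)² = |G : Z_{ker χ}| ≤ |G : G'|`, with equality if and only if
`Z_{ker χ} ≤ G'`, and every `N` not containing `G'` lies in the kernel of some `χ ∈ Irr(G | G')`.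
For (3), the squares `χ(1)²` with `χ ∈ Irr(G | G')` sum to `|G| - |G : G'| = (|G'| - 1) |G : G'|`
and each is at most `|G : G'|`, so all are equal to it if and only if there are `|G'| - 1` of them.
-/

open scoped commutatorElement

universe u v

section Commutators

variable {G : Type*} [Group G]

lemma commutatorElement_mem_commutator (x y : G) : ⁅x, y⁆ ∈ commutator G :=
  Subgroup.commutator_mem_commutator (Subgroup.mem_top x) (Subgroup.mem_top y)

lemma pow_commutatorElement {x y : G} (h : Commute x ⁅x, y⁆) (n : ℕ) :
    ⁅x ^ n, y⁆ = ⁅x, y⁆ ^ n := by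
  have hconj : y * x⁻¹ * y⁻¹ = x⁻¹ * ⁅x, y⁆ := by rw [commutatorElement_def]; group
  calc ⁅x ^ n, y⁆ = x ^ n * (y * x⁻¹ * y⁻¹) ^ n := by
        rw [conj_pow, commutatorElement_def]; group
    _ = ⁅x, y⁆ ^ n := by rw [hconj, h.inv_left.mul_pow, inv_pow, mul_inv_cancel_left]

lemma normal_of_le_center {H : Subgroup G} (h : H ≤ Subgroup.center G) : H.Normal where
  conj_mem n hn g := by rwa [Subgroup.mem_center_iff.1 (h hn) g, mul_inv_cancel_right]

lemma isMulCommutative_iff_forall_mul_comm : IsMulCommutative G ↔ ∀ a b : G, a * b = b * a :=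
  ⟨fun h => h.is_comm.comm, fun h => ⟨⟨h⟩⟩⟩

lemma commutator_quotient (N : Subgroup G) [N.Normal] :
    commutator (G ⧸ N) = (commutator G).map (QuotientGroup.mk' N) := by
  rw [commutator_def, commutator_def, Subgroup.map_commutator,
    Subgroup.map_top_of_surjective _ (QuotientGroup.mk'_surjective N)]

lemma card_commutator_quotient (N : Subgroup G) [N.Normal] :
    Nat.card (commutator (G ⧸ N)) = N.relIndex (commutator G) := by
  rw [commutator_quotient, ← Subgroup.relIndex_ker, QuotientGroup.ker_mk']

lemma center_le_upperCentralSeriesStep (N : Subgroup G) [N.Normal] :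
    Subgroup.center G ≤ N.upperCentralSeriesStep := fun g hg x => by
  rw [commutatorElement_eq_one_iff_mul_comm.2 (Subgroup.mem_center_iff.1 hg x).symm]
  exact one_mem N

lemma upperCentralSeriesStep_mono {M N : Subgroup G} [M.Normal] [N.Normal]
    (h : M ⊓ commutator G ≤ N) : M.upperCentralSeriesStep ≤ N.upperCentralSeriesStep :=
  fun g hg x => h ⟨hg x, commutatorElement_mem_commutator g x⟩

lemma commutator_quotient_eq_center_iff {M : Subgroup G} [M.Normal] (hM : M ≤ commutator G) :
    commutator (G ⧸ M) = Subgroup.center (G ⧸ M) ↔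
      M.upperCentralSeriesStep = commutator G := by
  have hcomap : (commutator (G ⧸ M)).comap (QuotientGroup.mk' M) = commutator G := by
    rw [commutator_quotient, Subgroup.comap_map_eq, QuotientGroup.ker_mk', sup_eq_left.2 hM]
  rw [Subgroup.upperCentralSeriesStep_eq_comap_center,
    ← (Subgroup.comap_injective (QuotientGroup.mk'_surjective M)).eq_iff, hcomap, eq_comm]

lemma exists_isCoatom_subgroupOf [Finite G] {H K : Subgroup G} (h : ¬ H ≤ K) :
    ∃ M ≤ H, K ⊓ H ≤ M ∧ IsCoatom (M.subgroupOf H) := by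
  have hne : K.subgroupOf H ≠ ⊤ := fun htop => h (Subgroup.subgroupOf_eq_top.1 htop)
  obtain ⟨M, hM, hKM⟩ := (eq_top_or_exists_le_coatom (K.subgroupOf H)).resolve_left hne
  refine ⟨M.map H.subtype, Subgroup.map_subtype_le M, ?_, ?_⟩
  · rintro x ⟨hxK, hxH⟩
    exact ⟨⟨x, hxH⟩, hKM (Subgroup.mem_subgroupOf.2 hxK), rfl⟩
  · rwa [Subgroup.subgroupOf, Subgroup.comap_map_eq_self_of_injective H.subtype_injective]

lemma not_le_of_isCoatom_subgroupOf {H M : Subgroup G} (h : IsCoatom (M.subgroupOf H)) :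
    ¬ H ≤ M :=
  fun hle => h.1 (Subgroup.subgroupOf_eq_top.2 hle)

end Commutators

section Frattini

variable {p : ℕ} [Fact p.Prime] {G : Type*} [Group G]

lemma index_eq_of_isCoatom [Finite G] (hG : IsPGroup p G) {M : Subgroup G} (hM : IsCoatom M) :
    M.index = p := by
  obtain ⟨n, hn⟩ := IsPGroup.iff_card.1 (hG.to_subgroup M)
  obtain ⟨m, hm⟩ := hG.exists_card_eq
  have hp : 1 < p := (Fact.out : p.Prime).one_lt
  have hnm : p ^ n < p ^ m := by
    rw [← hn, ← hm]
    exact (Subgroup.card_le_card_group M).lt_of_ne fun h => hM.1 (Subgroup.eq_top_of_card_eq M h)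
  obtain ⟨K, hK, hMK⟩ := Sylow.exists_subgroup_card_pow_succ
    (hm ▸ pow_dvd_pow p ((Nat.pow_lt_pow_iff_right hp).1 hnm)) hn
  have hK_top : K = ⊤ := by
    refine hM.2 K (hMK.lt_of_ne ?_)
    rintro rfl
    exact absurd (Nat.pow_right_injective hp (hn.symm.trans hK)) n.lt_succ_self.ne
  rw [hK_top, Subgroup.card_top, ← Subgroup.card_mul_index M, hn, pow_succ] at hK
  exact Nat.eq_of_mul_eq_mul_left (by positivity) hK

lemma commutator_le_frattini [Group.IsNilpotent G] : commutator G ≤ frattini G := by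
  refine le_iInf₂ fun M hM => ?_
  have : M.Normal := Subgroup.NormalizerCondition.normal_of_coatom M
    Group.normalizerCondition_of_isNilpotent hM
  have : IsSimpleOrder (Subgroup (G ⧸ M)) :=
    (OrderIso.isSimpleOrder_iff (β := Set.Ici M) (QuotientGroup.comapMk'OrderIso M)).2
      (Set.isSimpleOrder_Ici_iff_isCoatom.2 hM)
  have : IsSimpleGroup (G ⧸ M) :=
    { toNontrivial := Subgroup.nontrivial_iff.1 inferInstance
      eq_bot_or_eq_top_of_normal := fun H _ => eq_bot_or_eq_top H }
  exact Subgroup.Normal.quotient_commutative_iff_commutator_le.1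
    (isMulCommutative_iff_forall_mul_comm.2 (IsSimpleGroup.comm_iff_isSolvable.2 inferInstance))

lemma frattini_eq_bot [IsCoatomic (Subgroup G)] [ComplementedLattice (Subgroup G)] :
    frattini G = ⊥ := by
  obtain ⟨K, hK⟩ := exists_isCompl (frattini G)
  have hK_top : K = ⊤ := frattini_nongenerating hK.symm.sup_eq_top
  simpa [hK_top] using hK.inf_eq_bot

lemma complementedLattice_subgroup_of_pow_eq_one {A : Type*} [CommGroup A]
    (h : ∀ a : A, a ^ p = 1) : ComplementedLattice (Subgroup A) := by
  let := AddCommGroup.zmodModule (n := p) (G := Additive A) h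
  exact (Subgroup.toAddSubgroup.trans
    (AddSubgroup.toZModSubmodule (M := Additive A) p)).symm.complementedLattice

lemma frattini_le_commutator [Finite G] (h : ∀ x : G, x ^ p ∈ commutator G) :
    frattini G ≤ commutator G := by
  have hpow (a : Abelianization G) : a ^ p = 1 := by
    obtain ⟨x, rfl⟩ := QuotientGroup.mk_surjective a
    exact (QuotientGroup.eq_one_iff (x ^ p)).2 (h x)
  have := complementedLattice_subgroup_of_pow_eq_one hpow
  have hle : frattini G ≤ (frattini (Abelianization G)).comap Abelianization.of :=
    frattini_le_comap_frattini_of_surjective (QuotientGroup.mk_surjective (s := commutator G))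
  rwa [frattini_eq_bot (G := Abelianization G), MonoidHom.comap_bot, Abelianization.ker_of] at hle

lemma isSpecial_of_pow_mem_commutator [Finite G] (hG : IsPGroup p G) (hnonab : commutator G ≠ ⊥)
    (hcenter : commutator G = Subgroup.center G) (hpow : ∀ x : G, x ^ p ∈ commutator G) :
    IsSpecial G := by
  have := hG.isNilpotent
  rw [ne_eq, commutator_eq_bot_iff, isMulCommutative_iff_forall_mul_comm] at hnonab
  exact ⟨hnonab, hcenter, commutator_le_frattini.antisymm (frattini_le_commutator hpow)⟩

end Frattini

section SemiExtraspecial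

variable {p : ℕ} {G : Type*} [Group G] [Finite G]

lemma IsSemiExtraspecial.upperCentralSeriesStep_le (h : IsSemiExtraspecial p G)
    {N : Subgroup G} [N.Normal] (hN : ¬ commutator G ≤ N) :
    N.upperCentralSeriesStep ≤ commutator G := by
  obtain ⟨-, ⟨-, hcenter, -⟩, hquot⟩ := h
  obtain ⟨M, hM, hNM, hcoatom⟩ := exists_isCoatom_subgroupOf hN
  have hMn : M.Normal := normal_of_le_center (hM.trans hcenter.le)
  obtain ⟨-, ⟨-, hquot_center, -⟩, -⟩ := hquot M hMn hM hcoatom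
  calc N.upperCentralSeriesStep ≤ M.upperCentralSeriesStep := upperCentralSeriesStep_mono hNM
    _ = commutator G := (commutator_quotient_eq_center_iff hM).1 hquot_center

variable [Fact p.Prime]

lemma pow_mem_upperCentralSeriesStep (hG : IsPGroup p G)
    (hclass : commutator G ≤ Subgroup.center G) {M : Subgroup G} [M.Normal]
    (hM : IsCoatom (M.subgroupOf (commutator G))) (x : G) :
    x ^ p ∈ M.upperCentralSeriesStep := fun y => by
  let c : commutator G := ⟨⁅x, y⁆, commutatorElement_mem_commutator x y⟩
  have hc : Commute x ⁅x, y⁆ := Subgroup.mem_center_iff.1 (hclass c.2) x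
  have := normal_of_le_center hclass
  have hpow : c ^ (M.subgroupOf (commutator G)).index ∈ M.subgroupOf (commutator G) :=
    Subgroup.pow_index_mem _ c
  rw [index_eq_of_isCoatom (hG.to_subgroup _) hM] at hpow
  rw [pow_commutatorElement hc]
  exact hpow

lemma isExtraspecial_quotient (hG : IsPGroup p G) (hpow : ∀ x : G, x ^ p ∈ commutator G)
    {M : Subgroup G} [M.Normal] (hM : M ≤ commutator G)
    (hcoatom : IsCoatom (M.subgroupOf (commutator G)))
    (hcenter : M.upperCentralSeriesStep = commutator G) : IsExtraspecial p (G ⧸ M) := by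
  have hquot : IsPGroup p (G ⧸ M) := hG.to_quotient M
  have hcard : Nat.card (commutator (G ⧸ M)) = p :=
    (card_commutator_quotient M).trans (index_eq_of_isCoatom (hG.to_subgroup _) hcoatom)
  refine ⟨hquot, isSpecial_of_pow_mem_commutator hquot ?_
    ((commutator_quotient_eq_center_iff hM).2 hcenter) ?_, hcard⟩
  · rw [ne_eq, ← Subgroup.card_eq_one, hcard]
    exact (Fact.out : p.Prime).ne_one
  · intro q
    obtain ⟨x, rfl⟩ := QuotientGroup.mk_surjective q
    exact commutator_quotient M ▸ ⟨x ^ p, hpow x, rfl⟩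

theorem isSemiExtraspecial_iff_upperCentralSeriesStep_le (hG : IsPGroup p G)
    (hclass : commutator G ≤ Subgroup.center G) (hnonab : commutator G ≠ ⊥) :
    IsSemiExtraspecial p G ↔ ∀ (N : Subgroup G) [N.Normal], ¬ commutator G ≤ N →
      N.upperCentralSeriesStep ≤ commutator G := by
  refine ⟨fun h N _ => h.upperCentralSeriesStep_le, fun h => ?_⟩
  have hbot : ¬ commutator G ≤ ⊥ := fun hle => hnonab (le_bot_iff.1 hle)
  have hcenter : commutator G = Subgroup.center G :=
    hclass.antisymm ((center_le_upperCentralSeriesStep ⊥).trans (h ⊥ hbot))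
  have hpow (x : G) : x ^ p ∈ commutator G := by
    obtain ⟨M, hM, -, hcoatom⟩ := exists_isCoatom_subgroupOf hbot
    have := normal_of_le_center (hM.trans hclass)
    exact h M (not_le_of_isCoatom_subgroupOf hcoatom)
      (pow_mem_upperCentralSeriesStep hG hclass hcoatom x)
  refine ⟨hG, isSpecial_of_pow_mem_commutator hG hnonab hcenter hpow, fun M _ hM hcoatom => ?_⟩
  exact isExtraspecial_quotient hG hpow hM hcoatom
    ((h M (not_le_of_isCoatom_subgroupOf hcoatom)).antisymm
      (hclass.trans (center_le_upperCentralSeriesStep M)))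

end SemiExtraspecial

section Schur

variable {k : Type u} [Field k] {G : Type v} [Group G] (V : FDRep k G) [Simple V]

lemma exists_eq_smul_id_of_commute [IsAlgClosed k] {T : V →ₗ[k] V}
    (hT : ∀ g, T ∘ₗ V.ρ g = V.ρ g ∘ₗ T) : ∃ c : k, T = c • LinearMap.id := by
  let f : V ⟶ V := FDRep.forget₂HomLinearEquiv V V (Rep.ofHom ⟨T, hT⟩)
  obtain ⟨c, hc⟩ := endomorphism_simple_eq_smul_id k f
  exact ⟨c, (congrArg (fun φ : V ⟶ V => φ.hom.hom.hom) hc).symm⟩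

lemma character_one_ne_zero [CharZero k] : V.character 1 ≠ 0 := by
  rw [FDRep.char_one, Nat.cast_ne_zero]
  intro h
  have : Subsingleton V := Module.finrank_zero_iff.1 h
  refine id_nonzero V ?_
  ext x
  exact Subsingleton.elim _ _

end Schur

section Orthogonality

variable {k : Type u} [Field k] [IsAlgClosed k] [CharZero k] {G : Type u} [Group G]

lemma sum_character_mul_character_inv [Fintype G] (V : FDRep k G) [Simple V] :
    ∑ g : G, V.character g * V.character g⁻¹ = Nat.card G :=
  (FDRep.simple_iff_char_is_norm_one V).1 inferInstance

lemma sum_character_mul_character_inv_eq_zero [Fintype G] (V W : FDRep k G) [Simple V]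
    [Simple W] (h : V.character ≠ W.character) : ∑ g : G, V.character g * W.character g⁻¹ = 0 := by
  have hG : (Nat.card G : k) ≠ 0 := Nat.cast_ne_zero.2 Nat.card_pos.ne'
  let := invertibleOfNonzero hG
  have horth := FDRep.char_orthonormal V W
  rw [if_neg fun ⟨i⟩ => h (FDRep.char_iso i)] at horth
  exact (mul_eq_zero.1 horth).resolve_left (inv_ne_zero hG)

lemma simple_of_isIrreducible [Finite G] {V : Type u} [AddCommGroup V] [Module k V]
    [FiniteDimensional k V] (ρ : Representation k G V) [ρ.IsIrreducible] :
    Simple (FDRep.of ρ) := by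
  have := Fintype.ofFinite G
  have hG : (Nat.card G : k) ≠ 0 := Nat.cast_ne_zero.2 Nat.card_pos.ne'
  let := invertibleOfNonzero hG
  have horth := Representation.char_orthonormal ρ ρ
  rw [if_pos ⟨Representation.Equiv.refl ρ⟩, inv_mul_eq_one₀ hG] at horth
  exact (FDRep.simple_iff_char_is_norm_one _).2 horth.symm

end Orthogonality

section Decomposition

lemma character_eq_add_of_isCompl {k G V : Type*} [Field k] [Group G] [AddCommGroup V] [Module k V]
    [FiniteDimensional k V] {ρ : Representation k G V} {σ τ : Subrepresentation ρ}
    (h : IsCompl σ.toSubmodule τ.toSubmodule) :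
    ρ.character = σ.toRepresentation.character + τ.toRepresentation.character := by
  funext g
  let e := Submodule.prodEquivOfIsCompl _ _ h
  have hconj : ρ g = e.conj ((σ.toRepresentation g).prodMap (τ.toRepresentation g)) := by
    ext v
    obtain ⟨⟨a, b⟩, rfl⟩ := e.surjective v
    simp [e, LinearEquiv.conj_apply, Submodule.coe_prodEquivOfIsCompl,
      Subrepresentation.toRepresentation]
  rw [Pi.add_apply, Representation.character, hconj, LinearMap.trace_conj',
    LinearMap.trace_prodMap', Representation.character, Representation.character]

lemma exists_isCompl_toSubmodule {k G V : Type*} [Field k] [CharZero k] [Group G] [Finite G]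
    [AddCommGroup V] [Module k V] [Nontrivial V] {ρ : Representation k G V}
    (h : ¬ ρ.IsIrreducible) : ∃ σ τ : Subrepresentation ρ,
      IsCompl σ.toSubmodule τ.toSubmodule ∧ σ.toSubmodule ≠ ⊥ ∧ σ.toSubmodule ≠ ⊤ := by
  have hbot_ne_top : (⊥ : Subrepresentation ρ) ≠ ⊤ := fun heq =>
    bot_ne_top (α := Submodule k V) (congrArg Subrepresentation.toSubmodule heq)
  obtain ⟨σ, hσ_bot, hσ_top⟩ : ∃ σ : Subrepresentation ρ, σ ≠ ⊥ ∧ σ ≠ ⊤ := by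
    by_contra! hcon
    exact h { exists_pair_ne := ⟨_, _, hbot_ne_top⟩
              eq_bot_or_eq_top := fun σ => or_iff_not_imp_left.2 (hcon σ) }
  have : ρ.IsSemisimpleRepresentation := inferInstance
  obtain ⟨τ, hτ⟩ := exists_isCompl σ
  refine ⟨σ, τ, ⟨disjoint_iff.2 ?_, codisjoint_iff.2 ?_⟩, ?_, ?_⟩
  · exact congrArg Subrepresentation.toSubmodule hτ.inf_eq_bot
  · exact congrArg Subrepresentation.toSubmodule hτ.sup_eq_top
  · exact fun heq => hσ_bot (Subrepresentation.toSubmodule_injective heq)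
  · exact fun heq => hσ_top (Subrepresentation.toSubmodule_injective heq)

variable (k : Type u) [Field k] (G : Type u) [Group G]

/-- The irreducible characters `Irr(G)` of `G` over the field `k`, as functions on `G`. -/
def irrCharacters : Set (G → k) := {χ | ∃ V : FDRep k G, Simple V ∧ V.character = χ}

variable {k G}

lemma character_mem_closure_irrCharacters [IsAlgClosed k] [CharZero k] [Finite G] {V : Type u}
    [AddCommGroup V] [Module k V] [FiniteDimensional k V] (ρ : Representation k G V) :
    ρ.character ∈ AddSubmonoid.closure (irrCharacters k G) := by
  induction hn : Module.finrank k V using Nat.strong_induction_on generalizing V with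
  | _ n ih =>
    rcases subsingleton_or_nontrivial V with hV | hV
    · have hzero : ρ.character = 0 := funext fun g => by
        rw [Representation.character, Subsingleton.elim (ρ g) 0, map_zero, Pi.zero_apply]
      exact hzero ▸ zero_mem _
    by_cases hirr : ρ.IsIrreducible
    · exact AddSubmonoid.subset_closure ⟨FDRep.of ρ, simple_of_isIrreducible ρ, rfl⟩
    obtain ⟨σ, τ, hc, hσ_bot, hσ_top⟩ := exists_isCompl_toSubmodule hirr
    have hadd := Submodule.finrank_add_eq_of_isCompl hc
    have hσ_lt := Submodule.finrank_lt hσ_top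
    have hσ_pos : Module.finrank k σ.toSubmodule ≠ 0 := Submodule.finrank_eq_zero.not.2 hσ_bot
    rw [character_eq_add_of_isCompl hc]
    exact add_mem (ih _ (by omega) σ.toRepresentation rfl) (ih _ (by omega) τ.toRepresentation rfl)

end Decomposition

section IrreducibleCharacters

variable {k : Type u} [Field k] {G : Type u} [Group G]

open scoped Classical in
lemma character_leftRegular [Finite G] (g : G) :
    (Representation.leftRegular k G).character g = if g = 1 then (Nat.card G : k) else 0 := by
  have := Fintype.ofFinite G
  have hdiag (x : G) : LinearMap.toMatrix (MonoidAlgebra.basis G k) (MonoidAlgebra.basis G k)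
      (Representation.leftRegular k G g) x x = if g = 1 then 1 else 0 := by
    rw [LinearMap.toMatrix_apply, MonoidAlgebra.basis_apply, Representation.ofMulAction_single,
      ← MonoidAlgebra.basis_apply, Module.Basis.repr_self, Finsupp.single_apply, smul_eq_mul]
    simp only [mul_eq_right]
  rw [Representation.character,
    LinearMap.trace_eq_matrix_trace k (MonoidAlgebra.basis G k), Matrix.trace]
  simp only [Matrix.diag_apply, hdiag, Finset.sum_const, Finset.card_univ, Nat.card_eq_fintype_card,
    nsmul_eq_mul, mul_ite, mul_one, mul_zero]

variable [IsAlgClosed k] [CharZero k]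

lemma sum_smul_irrCharacters_mul_inv [Fintype G] {s : Finset (G → k)}
    (hs : ↑s ⊆ irrCharacters k G) {m : (G → k) → ℕ} (hm : m.support ⊆ s) {ψ : G → k}
    (hψ : ψ ∈ irrCharacters k G) :
    ∑ g : G, (∑ χ ∈ s, m χ • χ) g * ψ g⁻¹ = m ψ * Nat.card G := by
  obtain ⟨W, _, rfl⟩ := hψ
  have hswap : ∑ g : G, (∑ χ ∈ s, m χ • χ) g * W.character g⁻¹ =
      ∑ χ ∈ s, m χ * ∑ g : G, χ g * W.character g⁻¹ := by
    simp_rw [Finset.sum_apply, Pi.smul_apply, nsmul_eq_mul, Finset.sum_mul, Finset.mul_sum,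
      mul_assoc]
    exact Finset.sum_comm
  rw [hswap, Finset.sum_eq_single W.character, sum_character_mul_character_inv]
  · intro χ hχ hne
    obtain ⟨V, _, rfl⟩ := hs hχ
    rw [sum_character_mul_character_inv_eq_zero V W hne, mul_zero]
  · intro hW
    rw [Function.support_subset_iff'.1 hm _ hW, Nat.cast_zero, zero_mul]

variable [Finite G]

variable (k G) in
theorem exists_finset_irrCharacters : ∃ s : Finset (G → k), ↑s = irrCharacters k G ∧
    ∑ χ ∈ s, χ 1 • χ = (Representation.leftRegular k G).character := by
  have := Fintype.ofFinite G
  obtain ⟨m, s, hs, hm, hsum⟩ := AddSubmonoid.mem_closure_iff_exists_finset_subset.1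
    (character_mem_closure_irrCharacters (Representation.leftRegular k G))
  have hmult {χ : G → k} (hχ : χ ∈ irrCharacters k G) : χ 1 = m χ := by
    have h := sum_smul_irrCharacters_mul_inv hs hm hχ
    rw [hsum, Fintype.sum_eq_single 1 fun g hg => by
      rw [character_leftRegular, if_neg hg, zero_mul], character_leftRegular, if_pos rfl, inv_one,
      mul_comm] at h
    exact mul_right_cancel₀ (Nat.cast_ne_zero.2 Nat.card_pos.ne') h
  refine ⟨s, hs.antisymm fun χ hχ => hm fun hm_zero => ?_, ?_⟩
  · obtain ⟨V, _, rfl⟩ := id hχ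
    exact character_one_ne_zero V (by rw [hmult hχ, hm_zero, Nat.cast_zero])
  · rw [← hsum]
    exact Finset.sum_congr rfl fun χ hχ => by rw [hmult (hs hχ), Nat.cast_smul_eq_nsmul]

lemma finite_irrCharacters : (irrCharacters k G).Finite := by
  obtain ⟨s, hs, -⟩ := exists_finset_irrCharacters k G
  exact hs ▸ s.finite_toSet

variable (k G) in
/-- The irreducible characters of a finite group `G` as a finite set, for use in sums. -/
noncomputable def irr : Finset (G → k) := finite_irrCharacters.toFinset

lemma mem_irr {χ : G → k} : χ ∈ irr k G ↔ ∃ V : FDRep k G, Simple V ∧ V.character = χ :=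
  Set.Finite.mem_toFinset _

open scoped Classical in
theorem sum_irr_one_mul (g : G) :
    ∑ χ ∈ irr k G, χ 1 * χ g = if g = 1 then (Nat.card G : k) else 0 := by
  obtain ⟨s, hs, hsum⟩ := exists_finset_irrCharacters k G
  have hirr : irr k G = s := Finset.coe_injective ((Set.Finite.coe_toFinset _).trans hs.symm)
  rw [hirr, ← character_leftRegular, ← hsum, Finset.sum_apply]
  rfl

end IrreducibleCharacters

section Kernel

variable {k : Type u} [Field k] {G : Type v} [Group G] (V : FDRep k G)

lemma character_mul_of_eq_smul_id {z : G} {c : k} (hz : V.ρ z = c • LinearMap.id) (g : G) :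
    V.character (z * g) = c * V.character g := by
  rw [FDRep.character, FDRep.character, map_mul, hz, ← Module.End.one_eq_id, smul_one_mul,
    map_smul, smul_eq_mul]

lemma sum_character_of_le_ker {N : Subgroup G} [Fintype N] (h : N ≤ V.ρ.ker) :
    ∑ n : N, V.character n = Nat.card N * V.character 1 := by
  have hconst (n : N) : V.character n = V.character 1 := by
    rw [FDRep.character, FDRep.character, MonoidHom.mem_ker.1 (h n.2), map_one V.ρ]
  rw [Fintype.sum_congr _ _ hconst, Finset.sum_const, Finset.card_univ, Nat.card_eq_fintype_card,
    nsmul_eq_mul]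

lemma sum_character_of_not_le_ker [IsAlgClosed k] [Simple V] {N : Subgroup G} [N.Normal]
    [Fintype N] (h : ¬ N ≤ V.ρ.ker) : ∑ n : N, V.character n = 0 := by
  obtain ⟨m, hmN, hm⟩ := SetLike.not_le_iff_exists.1 h
  let T : V →ₗ[k] V := ∑ n : N, V.ρ n
  have hcomm (g : G) : T ∘ₗ V.ρ g = V.ρ g ∘ₗ T := by
    simp only [T, ← Module.End.mul_eq_comp, Finset.sum_mul, Finset.mul_sum, ← map_mul]
    exact Fintype.sum_equiv (MulAut.conjNormal g⁻¹).toEquiv _ _ fun n =>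
      congrArg V.ρ (by simp [mul_assoc])
  have hfix : V.ρ m * T = T := by
    simp only [T, Finset.mul_sum, ← map_mul]
    exact Fintype.sum_equiv (Equiv.mulLeft (⟨m, hmN⟩ : N)) _ _ fun n => rfl
  obtain ⟨c, hc⟩ := exists_eq_smul_id_of_commute V hcomm
  have hc_zero : c = 0 := by
    by_contra hne
    refine hm (MonoidHom.mem_ker.2 ?_)
    rw [hc, mul_smul_comm] at hfix
    exact smul_right_injective _ hne hfix
  calc ∑ n : N, V.character n = LinearMap.trace k V T := (map_sum _ _ _).symm
    _ = 0 := by rw [hc, hc_zero, zero_smul, map_zero]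

end Kernel

section CharDegree

variable {k : Type u} [Field k] {G : Type v} [Group G]

/-- The degree `χ(1)` of a character `χ`, as a natural number. It is a junk value if `χ 1` is not
the image of a natural number. -/
noncomputable def charDegree (χ : G → k) : ℕ := Function.invFun Nat.cast (χ 1)

lemma charDegree_character [CharZero k] (V : FDRep k G) :
    charDegree V.character = Module.finrank k V := by
  rw [charDegree, FDRep.char_one]
  exact Function.leftInverse_invFun Nat.cast_injective _

end CharDegree

section IrrOver

variable {k : Type u} [Field k] [IsAlgClosed k] [CharZero k] {G : Type u} [Group G] [Finite G]

lemma finite_irrCharactersOver (N : Subgroup G) :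
    {χ : G → k | ∃ V : FDRep k G, Simple V ∧ ¬ N ≤ V.ρ.ker ∧ V.character = χ}.Finite :=
  finite_irrCharacters.subset fun _ ⟨V, hV, _, hχ⟩ => ⟨V, hV, hχ⟩

variable (k) in
/-- The set `Irr(G|N)` of irreducible characters of `G` whose kernel does not contain `N`. -/
noncomputable def irrOver (N : Subgroup G) : Finset (G → k) :=
  (finite_irrCharactersOver N).toFinset

lemma mem_irrOver {N : Subgroup G} {χ : G → k} :
    χ ∈ irrOver k N ↔ ∃ V : FDRep k G, Simple V ∧ ¬ N ≤ V.ρ.ker ∧ V.character = χ :=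
  Set.Finite.mem_toFinset _

lemma irrOver_subset_irr (N : Subgroup G) : irrOver k N ⊆ irr k G :=
  Set.Finite.toFinset_subset_toFinset.2 fun _ ⟨V, hV, _, hχ⟩ => ⟨V, hV, hχ⟩

lemma forall_mem_irrOver {N : Subgroup G} {P : ℕ → Prop} :
    (∀ χ ∈ irrOver k N, P (charDegree χ)) ↔
      ∀ V : FDRep k G, Simple V → ¬ N ≤ V.ρ.ker → P (Module.finrank k V) := by
  refine ⟨fun h V hV hN => ?_, fun h χ hχ => ?_⟩
  · exact charDegree_character V ▸ h _ (mem_irrOver.2 ⟨V, hV, hN, rfl⟩)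
  · obtain ⟨V, hV, hN, rfl⟩ := mem_irrOver.1 hχ
    exact (charDegree_character V).symm ▸ h V hV hN

open scoped Classical in
lemma sum_irr_sdiff_irrOver_sq (N : Subgroup G) [N.Normal] :
    ∑ χ ∈ irr k G \ irrOver k N, χ 1 ^ 2 = N.index := by
  have := Fintype.ofFinite N
  have hover (χ : G → k) (hχ : χ ∈ irrOver k N) : ∑ n : N, χ 1 * χ n = 0 := by
    obtain ⟨V, _, hV, rfl⟩ := mem_irrOver.1 hχ
    rw [← Finset.mul_sum, sum_character_of_not_le_ker V hV, mul_zero]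
  have hnot_over (χ : G → k) (hχ : χ ∈ irr k G \ irrOver k N) :
      ∑ n : N, χ 1 * χ n = Nat.card N * χ 1 ^ 2 := by
    obtain ⟨hirr, hnot⟩ := Finset.mem_sdiff.1 hχ
    obtain ⟨V, hV, rfl⟩ := mem_irr.1 hirr
    have hle : N ≤ V.ρ.ker := not_not.1 fun h => hnot (mem_irrOver.2 ⟨V, hV, h, rfl⟩)
    rw [← Finset.mul_sum, sum_character_of_le_ker V hle, sq, mul_left_comm]
  have hcolumn : ∑ n : N, ∑ χ ∈ irr k G, χ 1 * χ n = Nat.card G := by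
    simp_rw [sum_irr_one_mul, OneMemClass.coe_eq_one]
    exact Fintype.sum_ite_eq' 1 _
  have hcard : (Nat.card N : k) ≠ 0 := Nat.cast_ne_zero.2 Nat.card_pos.ne'
  refine mul_left_cancel₀ hcard ?_
  rw [← Nat.cast_mul, Subgroup.card_mul_index, ← hcolumn, Finset.sum_comm,
    ← Finset.sum_sdiff (irrOver_subset_irr N), Finset.sum_eq_zero hover, add_zero,
    Finset.sum_congr rfl hnot_over, Finset.mul_sum]

variable (k) in
theorem sum_irrOver_charDegree_sq_add_index (N : Subgroup G) [N.Normal] :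
    ∑ χ ∈ irrOver k N, charDegree χ ^ 2 + N.index = Nat.card G := by
  classical
  have hdegree (χ : G → k) (hχ : χ ∈ irrOver k N) : (charDegree χ : k) ^ 2 = χ 1 ^ 2 := by
    obtain ⟨V, -, -, rfl⟩ := mem_irrOver.1 hχ
    rw [charDegree_character, FDRep.char_one]
  have hsum : ∑ χ ∈ irr k G, χ 1 ^ 2 = Nat.card G := by
    simp_rw [sq, sum_irr_one_mul, if_pos]
  refine Nat.cast_injective (R := k) ?_
  push_cast
  rw [Finset.sum_congr rfl hdegree, ← hsum, ← Finset.sum_sdiff (irrOver_subset_irr N),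
    sum_irr_sdiff_irrOver_sq, add_comm]

variable (k) in
theorem exists_simple_le_ker_of_not_le {M N : Subgroup G} [M.Normal] [N.Normal] (h : ¬ N ≤ M) :
    ∃ V : FDRep k G, Simple V ∧ M ≤ V.ρ.ker ∧ ¬ N ≤ V.ρ.ker := by
  by_contra! hcon
  have hsub : irrOver k (M ⊔ N) ⊆ irrOver k M := fun χ hχ => by
    obtain ⟨V, hV, hMN, rfl⟩ := mem_irrOver.1 hχ
    exact mem_irrOver.2 ⟨V, hV, fun hM => hMN (sup_le hM (hcon V hV hM)), rfl⟩
  have hsum : ∑ χ ∈ irrOver k (M ⊔ N), charDegree χ ^ 2 ≤ ∑ χ ∈ irrOver k M, charDegree χ ^ 2 :=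
    Finset.sum_le_sum_of_subset hsub
  have hindex : (M ⊔ N).index < M.index := Subgroup.index_strictAnti (left_lt_sup.2 h)
  have hM := sum_irrOver_charDegree_sq_add_index k M
  have hMN := sum_irrOver_charDegree_sq_add_index k (M ⊔ N)
  omega

theorem forall_charDegree_sq_eq_index_iff {N : Subgroup G} [N.Normal]
    (hle : ∀ χ ∈ irrOver k N, charDegree χ ^ 2 ≤ N.index) :
    (∀ χ ∈ irrOver k N, charDegree χ ^ 2 = N.index) ↔
      (irrOver k N).card = Nat.card N - 1 := by
  have hsum : ∑ χ ∈ irrOver k N, charDegree χ ^ 2 = (Nat.card N - 1) * N.index := by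
    rw [Nat.sub_one_mul, Subgroup.card_mul_index, ← sum_irrOver_charDegree_sq_add_index k N,
      Nat.add_sub_cancel]
  rw [← Finset.sum_eq_sum_iff_of_le hle, hsum, Finset.sum_const, smul_eq_mul, eq_comm]
  exact Nat.mul_left_inj N.index_ne_zero_of_finite

end IrrOver

section Degree

variable {k : Type u} [Field k] [IsAlgClosed k] {G : Type u} [Group G] (V : FDRep k G)
  [Simple V]

lemma exists_eq_smul_id_of_mem_upperCentralSeriesStep {g : G}
    (hg : g ∈ V.ρ.ker.upperCentralSeriesStep) : ∃ c : k, V.ρ g = c • LinearMap.id := by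
  refine exists_eq_smul_id_of_commute V fun x => ?_
  have hcomm : V.ρ ⁅g, x⁆ = 1 := MonoidHom.mem_ker.1 (hg x)
  calc V.ρ g * V.ρ x = V.ρ (⁅g, x⁆ * (x * g)) := by
        rw [← map_mul, commutatorElement_def]; group
    _ = V.ρ x * V.ρ g := by rw [map_mul, hcomm, one_mul, map_mul]

lemma character_mul_character_inv_of_mem_upperCentralSeriesStep {g : G}
    (hg : g ∈ V.ρ.ker.upperCentralSeriesStep) :
    V.character g * V.character g⁻¹ = V.character 1 ^ 2 := by
  obtain ⟨c, hc⟩ := exists_eq_smul_id_of_mem_upperCentralSeriesStep V hg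
  have hone := character_mul_of_eq_smul_id V hc 1
  have hinv := character_mul_of_eq_smul_id V hc g⁻¹
  rw [mul_one] at hone
  rw [mul_inv_cancel] at hinv
  rw [hone, mul_right_comm, ← hinv, sq]

lemma character_eq_zero_of_notMem_upperCentralSeriesStep
    (h : commutator G ≤ V.ρ.ker.upperCentralSeriesStep) {g : G}
    (hg : g ∉ V.ρ.ker.upperCentralSeriesStep) : V.character g = 0 := by
  obtain ⟨x, hx⟩ : ∃ x, ⁅g, x⁆ ∉ V.ρ.ker := not_forall.1 hg
  obtain ⟨c, hc⟩ := exists_eq_smul_id_of_mem_upperCentralSeriesStep V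
    (h (commutatorElement_mem_commutator g x))
  have hc_ne_one : c ≠ 1 := by
    rintro rfl
    exact hx (MonoidHom.mem_ker.2 (hc.trans (one_smul k _)))
  have hfix : V.character g = c * V.character g := by
    have hconj := character_mul_of_eq_smul_id V hc (x * g * x⁻¹)
    rwa [FDRep.char_conj, show ⁅g, x⁆ * (x * g * x⁻¹) = g by
      rw [commutatorElement_def]; group] at hconj
  by_contra hne
  exact hc_ne_one (mul_right_cancel₀ hne (hfix.symm.trans (one_mul _).symm))

theorem finrank_sq_eq_index_upperCentralSeriesStep [CharZero k] [Finite G]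
    (h : commutator G ≤ V.ρ.ker.upperCentralSeriesStep) :
    Module.finrank k V ^ 2 = V.ρ.ker.upperCentralSeriesStep.index := by
  classical
  have := Fintype.ofFinite G
  set Z := V.ρ.ker.upperCentralSeriesStep
  have hterm (g : G) : V.character g * V.character g⁻¹ =
      if g ∈ Z then V.character 1 ^ 2 else 0 := by
    split_ifs with hg
    · exact character_mul_character_inv_of_mem_upperCentralSeriesStep V hg
    · rw [character_eq_zero_of_notMem_upperCentralSeriesStep V h hg, zero_mul]
  have hnorm := sum_character_mul_character_inv V
  have hcard : Nat.card Z = (Finset.univ.filter (· ∈ Z)).card := by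
    rw [Nat.card_eq_fintype_card, Fintype.card_subtype]
  rw [Fintype.sum_congr _ _ hterm, ← Finset.sum_filter, Finset.sum_const, ← hcard, nsmul_eq_mul,
    FDRep.char_one, ← Z.card_mul_index] at hnorm
  exact Nat.eq_of_mul_eq_mul_left Nat.card_pos (by exact_mod_cast hnorm)

theorem finrank_sq_le_index_commutator [CharZero k] [Finite G]
    (h : commutator G ≤ V.ρ.ker.upperCentralSeriesStep) :
    Module.finrank k V ^ 2 ≤ (commutator G).index :=
  finrank_sq_eq_index_upperCentralSeriesStep V h ▸ Subgroup.index_antitone h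

theorem finrank_sq_eq_index_commutator_iff [CharZero k] [Finite G]
    (h : commutator G ≤ V.ρ.ker.upperCentralSeriesStep) :
    Module.finrank k V ^ 2 = (commutator G).index ↔
      V.ρ.ker.upperCentralSeriesStep ≤ commutator G := by
  rw [finrank_sq_eq_index_upperCentralSeriesStep V h]
  refine ⟨fun hindex => ?_, fun hle => congrArg _ (hle.antisymm h)⟩
  by_contra hnot
  exact (Subgroup.index_strictAnti (lt_of_le_not_ge h hnot)).ne hindex

end Degree

theorem stmt6_general {k : Type u} [Field k] [IsAlgClosed k] [CharZero k] {p : ℕ} (hp : p.Prime)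
    {G : Type u} [Group G] [Finite G] (hpG : IsPGroup p G)
    (hclass : commutator G ≤ Subgroup.center G) (hnonab : commutator G ≠ ⊥) :
    (IsSemiExtraspecial p G ↔
        ∀ V : FDRep k G, Simple V → ¬ commutator G ≤ V.ρ.ker →
          Module.finrank k V ^ 2 = (commutator G).index) ∧
      ((∀ V : FDRep k G, Simple V → ¬ commutator G ≤ V.ρ.ker →
          Module.finrank k V ^ 2 = (commutator G).index) ↔
        {χ : G → k | ∃ V : FDRep k G, Simple V ∧ ¬ commutator G ≤ V.ρ.ker ∧
            V.character = χ}.ncard = Nat.card (commutator G) - 1) := by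
  have := Fact.mk hp
  have hstep (V : FDRep k G) : commutator G ≤ V.ρ.ker.upperCentralSeriesStep :=
    hclass.trans (center_le_upperCentralSeriesStep _)
  constructor
  · rw [isSemiExtraspecial_iff_upperCentralSeriesStep_le hpG hclass hnonab]
    refine ⟨fun h V _ hV => (finrank_sq_eq_index_commutator_iff V (hstep V)).2 (h V.ρ.ker hV),
      fun h N _ hN => ?_⟩
    obtain ⟨V, hV, hNV, hV_ker⟩ := exists_simple_le_ker_of_not_le k hN
    calc N.upperCentralSeriesStep ≤ V.ρ.ker.upperCentralSeriesStep :=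
          upperCentralSeriesStep_mono (inf_le_left.trans hNV)
      _ ≤ commutator G := (finrank_sq_eq_index_commutator_iff V (hstep V)).1 (h V hV hV_ker)
  · have hle : ∀ χ ∈ irrOver k (commutator G), charDegree χ ^ 2 ≤ (commutator G).index :=
      (forall_mem_irrOver (P := fun d => d ^ 2 ≤ (commutator G).index)).2 fun V _ _ =>
        finrank_sq_le_index_commutator V (hstep V)
    rw [← forall_mem_irrOver (P := fun d => d ^ 2 = (commutator G).index),
      forall_charDegree_sq_eq_index_iff hle, ← Set.ncard_coe_finset, irrOver,
      Set.Finite.coe_toFinset]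

lemma repKer_eq_ker {G : Type} [Group G] (V : FDRep ℂ G) : repKer V = V.ρ.ker := by
  ext g
  rw [repKer, MonoidHom.mem_ker, MonoidHom.mem_ker, Units.ext_iff,
    Representation.asGroupHom_apply, Units.val_one]

/-- For a finite `p`-group `G` of nilpotency class 2, the following are
equivalent: (1) `G` is semi-extraspecial; (2) `χ(1) = √|G : G'|` for every
`χ ∈ Irr(G | G')`; (3) `|Irr(G | G')| = |G'| - 1`. -/
theorem stmt6 {p : ℕ} (hp : p.Prime) {G : Type} [Group G] [Finite G]
    (hpG : IsPGroup p G) (hclass : commutator G ≤ Subgroup.center G)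
    (hnonab : commutator G ≠ ⊥) :
    (IsSemiExtraspecial p G ↔
        ∀ V : FDRep ℂ G, Simple V → ¬ commutator G ≤ repKer V →
          Module.finrank ℂ V ^ 2 = (commutator G).index) ∧
      ((∀ V : FDRep ℂ G, Simple V → ¬ commutator G ≤ repKer V →
          Module.finrank ℂ V ^ 2 = (commutator G).index) ↔
        {f : G → ℂ | ∃ V : FDRep ℂ G, Simple V ∧ ¬ commutator G ≤ repKer V ∧
            V.character = f}.ncard = Nat.card (commutator G) - 1) := by
  simpa only [repKer_eq_ker] using stmt6_general (k := ℂ) hp hpG hclass hnonab
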